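/- arXiv:1805.04795 — 3 statements merged into one kernel-verified Lean document; each statement's English description precedes it below -/
import Mathlib

section
/- Let X be a nonempty set, E a real topological vector space with a solid cone C, d : X × X → E a cone metric, e an interior point of C, and D(x,y) = ‖d(x,y)‖_e. Then a sequence {xₙ} in X converges to x ∈ X in (X,d) (meaning: for each c ∈ int C there is n₀ with c − d(xₙ,x) ∈ int C for all n ≥ n₀) if and only if D(xₙ,x) → 0; and {xₙ} is Cauchy in (X,d) (meaning: for each c ∈ int C there is n₀ with c − d(xₘ,xₙ) ∈ int C for all m,n ≥ n₀) if and only if {xₙ} is a Cauchy sequence in the metric space (X,D). -/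
open Filter Topology

/-- The Minkowski functional (gauge) of the order interval `[-e, e]`
determined by the cone `C`. -/
noncomputable def coneNorm {E : Type*} [AddCommGroup E] [Module ℝ E]
    (C : Set E) (e x : E) : ℝ :=
  gauge {z : E | z + e ∈ C ∧ e - z ∈ C} x

/-- Convergence of a sequence in a cone metric space: for each `c` in the interior
of the cone, eventually `d (x n) l ≪ c`. -/
def ConeConv {X E : Type*} [AddCommGroup E] [TopologicalSpace E]
    (C : Set E) (d : X → X → E) (x : ℕ → X) (l : X) : Prop :=
  ∀ c ∈ interior C, ∃ n₀ : ℕ, ∀ n ≥ n₀, c - d (x n) l ∈ interior C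

/-- Cauchyness of a sequence in a cone metric space: for each `c` in the interior
of the cone, eventually `d (x m) (x n) ≪ c`. -/
def ConeCauchy {X E : Type*} [AddCommGroup E] [TopologicalSpace E]
    (C : Set E) (d : X → X → E) (x : ℕ → X) : Prop :=
  ∀ c ∈ interior C, ∃ n₀ : ℕ, ∀ m ≥ n₀, ∀ n ≥ n₀, c - d (x m) (x n) ∈ interior C

/-!
The open unit ball of `‖·‖_e` is the interior of the order interval `[-e, e]`, so after rescaling
`‖u‖_e < ε` means that both `u + ε • e` and `ε • e - u` are interior to the cone. The first
condition is automatic for `u` in the cone, whence `‖u‖_e < ε ↔ u ≪ ε • e`. As every interior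
point `c` satisfies `ε • e ≪ c` for small `ε > 0`, being eventually `≪ c` for all `c ≫ 0` is the
same as having eventually arbitrarily small `‖·‖_e`. Convergence is this equivalence along `atTop`
on `ℕ`, Cauchyness is the same equivalence along `atTop` on `ℕ × ℕ`.
-/

/-- The order interval `[-e, e]` for the relation `x ⪯ y ↔ y - x ∈ C`, written so that its gauge is
`coneNorm C e` by definition. -/
def symmOrderInterval {E : Type*} [AddCommGroup E] (C : Set E) (e : E) : Set E :=
  {z : E | z + e ∈ C ∧ e - z ∈ C}

section Interior

variable {E : Type*} [AddCommGroup E] [TopologicalSpace E]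

open scoped Pointwise in
lemma convexCone_add_mem_interior {R : Type*} [Semiring R] [PartialOrder R] [SMul R E]
    [IsTopologicalAddGroup E] (C : ConvexCone R E) {x y : E} (hx : x ∈ interior (C : Set E))
    (hy : y ∈ C) : x + y ∈ interior (C : Set E) :=
  interior_mono (Set.add_subset_iff.2 fun _ ha _ hb ↦ C.add_mem ha hb)
    (subset_interior_add_left (Set.add_mem_add hx hy))

open scoped Pointwise in
lemma convexCone_smul_mem_interior_iff {𝕜 : Type*} [Field 𝕜] [LinearOrder 𝕜]
    [IsStrictOrderedRing 𝕜] [Module 𝕜 E] [ContinuousConstSMul 𝕜 E] (C : ConvexCone 𝕜 E)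
    {r : 𝕜} (hr : 0 < r) {x : E} :
    r • x ∈ interior (C : Set E) ↔ x ∈ interior (C : Set E) := by
  have smul_coe : r • (C : Set E) = C := by
    ext y
    rw [Set.mem_smul_set_iff_inv_smul_mem₀ hr.ne']
    exact C.smul_mem_iff (inv_pos.2 hr)
  nth_rw 1 [← smul_coe]
  rw [interior_smul₀ hr.ne', Set.smul_mem_smul_set_iff₀ hr.ne']

lemma exists_pos_sub_smul_mem_interior [Module ℝ E] [ContinuousSub E] [ContinuousSMul ℝ E]
    {s : Set E} {c : E} (hc : c ∈ interior s) (v : E) :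
    ∃ ε : ℝ, 0 < ε ∧ c - ε • v ∈ interior s := by
  have tendsto_c : Tendsto (fun ε : ℝ ↦ c - ε • v) (𝓝 0) (𝓝 c) :=
    Continuous.tendsto' (by fun_prop) _ _ (by simp)
  have eventually_mem : ∀ᶠ ε : ℝ in 𝓝[>] 0, c - ε • v ∈ interior s :=
    (tendsto_c.mono_left nhdsWithin_le_nhds).eventually_mem (isOpen_interior.mem_nhds hc)
  exact (eventually_mem.and self_mem_nhdsWithin).exists.imp fun _ h ↦ h.symm

lemma interior_symmOrderInterval [IsTopologicalAddGroup E] (C : Set E) (e : E) :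
    interior (symmOrderInterval C e) = symmOrderInterval (interior C) e := by
  change interior ((· + e) ⁻¹' C ∩ (e - ·) ⁻¹' C) = (· + e) ⁻¹' interior C ∩ (e - ·) ⁻¹' interior C
  rw [interior_inter]
  exact congrArg₂ (· ∩ ·) ((Homeomorph.addRight e).preimage_interior C).symm
    ((Homeomorph.subLeft e).preimage_interior C).symm

lemma symmOrderInterval_mem_nhds_zero [IsTopologicalAddGroup E] {C : Set E} {e : E}
    (he : e ∈ interior C) : symmOrderInterval C e ∈ 𝓝 0 := by
  rw [← mem_interior_iff_mem_nhds, interior_symmOrderInterval]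
  simpa [symmOrderInterval] using he

end Interior

lemma convex_symmOrderInterval {E : Type*} [AddCommGroup E] [Module ℝ E] {C : Set E}
    (hC : Convex ℝ C) (e : E) : Convex ℝ (symmOrderInterval C e) := by
  have convex_sub : Convex ℝ {z : E | e - z ∈ C} := by
    simpa only [sub_eq_add_neg] using! (hC.translate_preimage_right e).neg
  exact (hC.translate_preimage_left e).inter convex_sub

section ConeNorm

variable {E : Type*} [AddCommGroup E] [Module ℝ E] [TopologicalSpace E]
  [IsTopologicalAddGroup E] [ContinuousSMul ℝ E]

lemma coneNorm_lt_one_iff {C : Set E} (hC : Convex ℝ C) {e : E} (he : e ∈ interior C) {x : E} :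
    coneNorm C e x < 1 ↔ x + e ∈ interior C ∧ e - x ∈ interior C := by
  change gauge (symmOrderInterval C e) x < 1 ↔ x ∈ symmOrderInterval (interior C) e
  rw [gauge_lt_one_iff_mem_interior (convex_symmOrderInterval hC e)
    (symmOrderInterval_mem_nhds_zero he), interior_symmOrderInterval]

variable (C : ConvexCone ℝ E) {e : E}

lemma coneNorm_lt_iff (he : e ∈ interior (C : Set E)) {ε : ℝ} (hε : 0 < ε) {x : E} :
    coneNorm C e x < ε ↔
      x + ε • e ∈ interior (C : Set E) ∧ ε • e - x ∈ interior (C : Set E) := by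
  have rescale : coneNorm C e x < ε ↔ coneNorm C e (ε⁻¹ • x) < 1 := by
    simp only [coneNorm]
    rw [gauge_smul_of_nonneg (inv_nonneg.2 hε.le), smul_eq_mul, inv_mul_lt_one₀ hε]
  rw [rescale, coneNorm_lt_one_iff C.convex he, ← convexCone_smul_mem_interior_iff C hε,
    ← convexCone_smul_mem_interior_iff C hε (x := e - _), smul_add, smul_sub,
    smul_inv_smul₀ hε.ne']

lemma coneNorm_lt_iff_of_mem (he : e ∈ interior (C : Set E)) {ε : ℝ} (hε : 0 < ε) {u : E}
    (hu : u ∈ C) : coneNorm C e u < ε ↔ ε • e - u ∈ interior (C : Set E) := by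
  rw [coneNorm_lt_iff C he hε, add_comm u, and_iff_right]
  exact convexCone_add_mem_interior C ((convexCone_smul_mem_interior_iff C hε).2 he) hu

lemma forall_eventually_sub_mem_interior_iff (he : e ∈ interior (C : Set E)) {ι : Type*}
    {l : Filter ι} {u : ι → E} (hu : ∀ i, u i ∈ C) :
    (∀ c ∈ interior (C : Set E), ∀ᶠ i in l, c - u i ∈ interior (C : Set E)) ↔
      ∀ ε : ℝ, 0 < ε → ∀ᶠ i in l, coneNorm C e (u i) < ε := by
  refine ⟨fun h ε hε ↦ ?_, fun h c hc ↦ ?_⟩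
  · filter_upwards [h (ε • e) ((convexCone_smul_mem_interior_iff C hε).2 he)] with i hi
    exact (coneNorm_lt_iff_of_mem C he hε (hu i)).2 hi
  · obtain ⟨ε, hε, hcε⟩ := exists_pos_sub_smul_mem_interior hc e
    filter_upwards [h ε hε] with i hi
    have hui : ε • e - u i ∈ interior (C : Set E) := (coneNorm_lt_iff_of_mem C he hε (hu i)).1 hi
    rw [← sub_add_sub_cancel c (ε • e) (u i)]
    exact convexCone_add_mem_interior C hcε (interior_subset hui)

end ConeNorm

lemma tendsto_coneNorm_zero_iff {E : Type*} [AddCommGroup E] [Module ℝ E] {C : Set E} {e : E}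
    {ι : Type*} {l : Filter ι} {u : ι → E} :
    Tendsto (fun i ↦ coneNorm C e (u i)) l (𝓝 0) ↔
      ∀ ε : ℝ, 0 < ε → ∀ᶠ i in l, coneNorm C e (u i) < ε := by
  have coneNorm_nonneg (x : E) : 0 ≤ coneNorm C e x := gauge_nonneg x
  simp only [Metric.tendsto_nhds, Real.dist_0_eq_abs, abs_of_nonneg (coneNorm_nonneg _), gt_iff_lt]

theorem stmt_12_general {X E : Type*} [AddCommGroup E] [Module ℝ E] [TopologicalSpace E]
    [IsTopologicalAddGroup E] [ContinuousSMul ℝ E] (C : ConvexCone ℝ E)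
    (d : X → X → E) (hd_pos : ∀ x y : X, d x y ∈ C) (e : E) (he : e ∈ interior (C : Set E)) :
    (∀ (x : ℕ → X) (l : X), ConeConv C d x l ↔
      Tendsto (fun n => coneNorm C e (d (x n) l)) atTop (𝓝 0)) ∧
    (∀ x : ℕ → X, ConeCauchy C d x ↔
      ∀ ε : ℝ, 0 < ε → ∃ n₀ : ℕ, ∀ m ≥ n₀, ∀ n ≥ n₀,
        coneNorm C e (d (x m) (x n)) < ε) := by
  refine ⟨fun x l ↦ ?_, fun x ↦ ?_⟩
  · rw [tendsto_coneNorm_zero_iff,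
      ← forall_eventually_sub_mem_interior_iff C he fun n ↦ hd_pos (x n) l]
    simp only [ConeConv, eventually_atTop]
  · have h := forall_eventually_sub_mem_interior_iff C he (l := atTop)
      fun p : ℕ × ℕ ↦ hd_pos (x p.1) (x p.2)
    simpa only [ConeCauchy, eventually_atTop_prod_self'] using h

theorem stmt_12 {X : Type*} [Nonempty X]
    {E : Type*} [AddCommGroup E] [Module ℝ E] [TopologicalSpace E]
    [IsTopologicalAddGroup E] [ContinuousSMul ℝ E]
    (C : Set E) (hC_closed : IsClosed C) (hC_ne : C ≠ {0})
    (hC_add : ∀ x ∈ C, ∀ y ∈ C, x + y ∈ C)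
    (hC_smul : ∀ r : ℝ, 0 ≤ r → ∀ x ∈ C, r • x ∈ C)
    (hC_pointed : C ∩ (-C) = {0})
    (hSolid : (interior C).Nonempty)
    (d : X → X → E)
    (hd_pos : ∀ x y : X, d x y ∈ C)
    (hd_eq : ∀ x y : X, d x y = 0 ↔ x = y)
    (hd_symm : ∀ x y : X, d x y = d y x)
    (hd_tri : ∀ x y z : X, d x y + d y z - d x z ∈ C)
    (e : E) (he : e ∈ interior C) :
    (∀ (x : ℕ → X) (l : X), ConeConv C d x l ↔
      Tendsto (fun n => coneNorm C e (d (x n) l)) atTop (𝓝 0)) ∧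
    (∀ x : ℕ → X, ConeCauchy C d x ↔
      ∀ ε : ℝ, 0 < ε → ∃ n₀ : ℕ, ∀ m ≥ n₀, ∀ n ≥ n₀,
        coneNorm C e (d (x m) (x n)) < ε) :=
  stmt_12_general ⟨C, fun r hr x hx ↦ hC_smul r hr.le x hx, fun x hx y hy ↦ hC_add x hx y hy⟩
    d hd_pos e he
end

section
/- Let (X,d) be a cone metric space over a real topological vector space E with a solid cone C, and let f, g : X → X satisfy f(X) ⊆ g(X), with g(X) (or f(X)) complete as a subspace of (X,d). Suppose there exist nonnegative constants λ, μ, ν, ξ, π with λ + μ + ν + ξ + π < 1 such that d(fx,fy) ⪯ λ·d(gx,gy) + μ·d(gx,fx) + ν·d(gy,fy) + ξ·d(gx,fy) + π·d(gy,fx) for all x, y ∈ X (Hardy–Rogers condition). Then f and g have a unique point of coincidence; moreover, if f and g are weakly compatible, then they have a unique common fixed point in X. -/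
open Filter Topology

/-- A subset `S` of a cone metric space is complete if every Cauchy sequence with
values in `S` converges to a point of `S`. -/
def ConeSubsetComplete {X E : Type*} [AddCommGroup E] [TopologicalSpace E]
    (C : Set E) (d : X → X → E) (S : Set X) : Prop :=
  ∀ x : ℕ → X, (∀ n, x n ∈ S) → ConeCauchy C d x → ∃ l ∈ S, ConeConv C d x l

/-!
For a fixed interior point `e` of the cone `K`, the Minkowski functional `p` of `{v | v ⪯ e}` is
monotone and sublinear, and `p v < r` holds exactly when `v ≪ r e`. Since `K` is closed and salient,
`p` vanishes on `K` only at `0`, so `p ∘ d` is a genuine metric with the same Cauchy and convergent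
sequences as `d`, and it inherits the Hardy–Rogers inequality. In that metric, averaging the
inequality over `(x, y)` and `(y, x)` makes the Picard–Jungck sequence `g xₙ₊₁ = f xₙ` contract
geometrically.
-/

theorem existsUnique_common_fixedPoint {X : Type*} {f g : X → X}
    (hw : ∃! w, ∃ x, f x = w ∧ g x = w) (hcomm : ∀ x, f x = g x → f (g x) = g (f x)) :
    ∃! z, f z = z ∧ g z = z := by
  obtain ⟨w, ⟨x, hfx, hgx⟩, huniq⟩ := hw
  have hfg_w : f w = g w := by simpa only [hfx, hgx] using hcomm x (hfx.trans hgx.symm)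
  have hfw : f w = w := huniq (f w) ⟨w, rfl, hfg_w.symm⟩
  exact ⟨w, ⟨hfw, hfg_w.symm.trans hfw⟩, fun z hz ↦ huniq z ⟨z, hz⟩⟩

/-- The Hardy–Rogers condition for `f` relative to `g`, in the form symmetric in `x` and `y`. -/
def HardyRogersWith {α X : Type*} [PseudoMetricSpace X] (a b c : ℝ) (f g : α → X) : Prop :=
  ∀ x y, dist (f x) (f y) ≤ a * dist (g x) (g y) + b * (dist (g x) (f x) + dist (g y) (f y)) +
    c * (dist (g x) (f y) + dist (g y) (f x))

namespace HardyRogersWith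

variable {α X : Type*} {a b c : ℝ} {f g : α → X}

section PseudoMetricSpace

variable [PseudoMetricSpace X]

theorem of_asymmetric {lam mu nu xi pi : ℝ}
    (h : ∀ x y, dist (f x) (f y) ≤ lam * dist (g x) (g y) + mu * dist (g x) (f x) +
      nu * dist (g y) (f y) + xi * dist (g x) (f y) + pi * dist (g y) (f x)) :
    HardyRogersWith lam ((mu + nu) / 2) ((xi + pi) / 2) f g := by
  intro x y
  have hyx := h y x
  rw [dist_comm (f y), dist_comm (g y) (g x)] at hyx
  linarith [h x y]

theorem dist_map_map_le (h : HardyRogersWith a b c f g) (hc : 0 ≤ c) (hbc : b + c < 1) {x y : α}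
    (hxy : g y = f x) :
    dist (f x) (f y) ≤ (a + b + c) / (1 - b - c) * dist (g x) (f x) := by
  have hcontr := h x y
  rw [hxy, dist_self] at hcontr
  have htri := mul_le_mul_of_nonneg_left (dist_triangle (g x) (f x) (f y)) hc
  rw [div_mul_eq_mul_div, le_div_iff₀ (by linarith)]
  linarith

theorem cauchySeq (h : HardyRogersWith a b c f g) (ha : 0 ≤ a) (hb : 0 ≤ b) (hc : 0 ≤ c)
    (habc : a + 2 * b + 2 * c < 1) {x : ℕ → α} (hx : ∀ n, g (x (n + 1)) = f (x n)) :
    CauchySeq (fun n ↦ f (x n)) := by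
  have hden : 0 < 1 - b - c := by linarith
  have hratio_nonneg : 0 ≤ (a + b + c) / (1 - b - c) := by positivity
  have hratio_lt_one : (a + b + c) / (1 - b - c) < 1 := by rw [div_lt_one hden]; linarith
  refine cauchySeq_of_le_geometric _ (dist (f (x 0)) (f (x 1))) hratio_lt_one fun n ↦ ?_
  rw [mul_comm]
  refine le_geom (u := fun n ↦ dist (f (x n)) (f (x (n + 1)))) hratio_nonneg n fun k _ ↦ ?_
  simpa only [hx k] using h.dist_map_map_le hc (by linarith) (hx (k + 1))

end PseudoMetricSpace

variable [MetricSpace X]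

theorem map_eq_map (h : HardyRogersWith a b c f g) (hac : a + 2 * c < 1) {u v : α}
    (hu : f u = g u) (hv : f v = g v) : f u = f v := by
  have hcontr := h u v
  rw [← hu, ← hv, dist_self, dist_self, dist_comm (f v)] at hcontr
  have hmul : (1 - (a + 2 * c)) * dist (f u) (f v) ≤ 0 := by linarith
  exact dist_le_zero.1 (nonpos_of_mul_nonpos_right hmul (by linarith))

theorem map_eq_of_tendsto (h : HardyRogersWith a b c f g) (hbc : b + c < 1) {x : ℕ → α}
    (hx : ∀ n, g (x (n + 1)) = f (x n)) {u : α}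
    (hu : Tendsto (fun n ↦ f (x n)) atTop (𝓝 (g u))) : f u = g u := by
  have hu' : Tendsto (fun n ↦ f (x (n + 1))) atTop (𝓝 (g u)) := hu.comp (tendsto_add_atTop_nat 1)
  have hlim : dist (g u) (f u) ≤ a * dist (g u) (g u) +
      b * (dist (g u) (g u) + dist (g u) (f u)) + c * (dist (g u) (f u) + dist (g u) (g u)) := by
    refine le_of_tendsto_of_tendsto' (hu'.dist tendsto_const_nhds)
      ((((hu.dist tendsto_const_nhds).const_mul a).add
        (((hu.dist hu').add tendsto_const_nhds).const_mul b)).add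
        (((hu.dist tendsto_const_nhds).add (tendsto_const_nhds.dist hu')).const_mul c))
      fun n ↦ ?_
    simpa only [hx n] using h (x (n + 1)) u
  rw [dist_self] at hlim
  have hmul : (1 - (b + c)) * dist (g u) (f u) ≤ 0 := by linarith
  exact (dist_le_zero.1 (nonpos_of_mul_nonpos_right hmul (by linarith))).symm

theorem existsUnique_coincidence [Nonempty α] (h : HardyRogersWith a b c f g)
    (ha : 0 ≤ a) (hb : 0 ≤ b) (hc : 0 ≤ c) (habc : a + 2 * b + 2 * c < 1) {S : Set X}
    (hS : IsComplete S) (hfS : Set.range f ⊆ S) (hSg : S ⊆ Set.range g) :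
    ∃! w, ∃ u, f u = w ∧ g u = w := by
  choose next hnext using fun y ↦ hSg (hfS (Set.mem_range_self (f := f) y))
  obtain ⟨x₀⟩ := ‹Nonempty α›
  let x : ℕ → α := fun n ↦ next^[n] x₀
  have hx (n : ℕ) : g (x (n + 1)) = f (x n) := by
    simp only [x, Function.iterate_succ_apply', hnext]
  obtain ⟨l, hlS, hl⟩ := cauchySeq_tendsto_of_isComplete hS
    (fun n ↦ hfS (Set.mem_range_self (x n))) (h.cauchySeq ha hb hc habc hx)
  obtain ⟨u, rfl⟩ := hSg hlS
  have hu : f u = g u := h.map_eq_of_tendsto (by linarith) hx hl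
  refine ⟨f u, ⟨u, rfl, hu.symm⟩, ?_⟩
  rintro _ ⟨v, rfl, hv⟩
  exact h.map_eq_map (by linarith) hv.symm hu

end HardyRogersWith

section SubLeft

variable {E : Type*} [AddCommGroup E] [TopologicalSpace E] [IsTopologicalAddGroup E] {s : Set E}
  {e v : E}

theorem mem_interior_setOf_sub_mem :
    v ∈ interior {w | e - w ∈ s} ↔ e - v ∈ interior s :=
  (Set.ext_iff.1 ((Homeomorph.subLeft e).preimage_interior s) v).symm

theorem setOf_sub_mem_mem_nhds_zero (he : e ∈ interior s) : {v | e - v ∈ s} ∈ 𝓝 0 :=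
  mem_interior_iff_mem_nhds.1 (mem_interior_setOf_sub_mem.2 (by rwa [sub_zero]))

end SubLeft

/-- The Minkowski functional of `{v | v ⪯ e}`, where `⪯` is the order with positive cone `C`. It
turns `C`-valued distances into real ones. -/
noncomputable def orderUnitGauge {E : Type*} [AddCommGroup E] [Module ℝ E] (C : Set E) (e : E) :
    E → ℝ :=
  gauge {v | e - v ∈ C}

section OrderUnitGauge

variable {E : Type*} [AddCommGroup E] [Module ℝ E] {K : ConvexCone ℝ E} {s : Set E} {e u v : E}

theorem convex_setOf_sub_mem (hs : Convex ℝ s) (e : E) : Convex ℝ {v | e - v ∈ s} :=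
  hs.affine_preimage (AffineEquiv.constVSub ℝ e).toAffineMap

variable [TopologicalSpace E]

open scoped Pointwise in
theorem smul_mem_interior_iff [ContinuousConstSMul ℝ E] {r : ℝ} (hr : 0 < r) :
    r • v ∈ interior (K : Set E) ↔ v ∈ interior (K : Set E) := by
  have hK : r • (K : Set E) = K := by
    ext w
    rw [Set.mem_smul_set_iff_inv_smul_mem₀ hr.ne']
    exact K.smul_mem_iff (inv_pos.2 hr)
  rw [← Set.smul_mem_smul_set_iff₀ hr.ne' (interior (K : Set E)) v, ← interior_smul₀ hr.ne', hK]

theorem exists_pos_sub_smul_mem_interior_s15 [ContinuousSub E] [ContinuousSMul ℝ E]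
    (hu : u ∈ interior s) (v : E) : ∃ t > (0 : ℝ), u - t • v ∈ interior s := by
  have hcont : Continuous fun t : ℝ ↦ u - t • v := by fun_prop
  have hnear : ∀ᶠ t in 𝓝[>] (0 : ℝ), u - t • v ∈ interior s :=
    (hcont.continuousAt.eventually_mem
      (isOpen_interior.mem_nhds (by simpa using hu))).filter_mono nhdsWithin_le_nhds
  obtain ⟨t, ht, htpos⟩ := (hnear.and self_mem_nhdsWithin).exists
  exact ⟨t, htpos, ht⟩

variable [IsTopologicalAddGroup E]

theorem add_mem_interior (hu : u ∈ interior (K : Set E)) (hv : v ∈ K) :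
    u + v ∈ interior (K : Set E) :=
  interior_mono (Set.add_subset_iff.2 fun _ hx _ hy ↦ K.add_mem hx hy)
    (subset_interior_add_left (Set.add_mem_add hu hv))

variable [ContinuousSMul ℝ E]

theorem orderUnitGauge_lt_iff (he : e ∈ interior (K : Set E)) {r : ℝ} (hr : 0 < r) :
    orderUnitGauge K e v < r ↔ r • e - v ∈ interior (K : Set E) := by
  calc
    orderUnitGauge K e v < r ↔ orderUnitGauge K e (r⁻¹ • v) < 1 := by
      rw [orderUnitGauge, gauge_smul_of_nonneg (inv_nonneg.2 hr.le), smul_eq_mul,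
        inv_mul_lt_one₀ hr]
    _ ↔ e - r⁻¹ • v ∈ interior (K : Set E) := by
      rw [orderUnitGauge, gauge_lt_one_iff_mem_interior (convex_setOf_sub_mem K.convex e)
        (setOf_sub_mem_mem_nhds_zero he), mem_interior_setOf_sub_mem]
    _ ↔ r • e - v ∈ interior (K : Set E) := by
      rw [← smul_mem_interior_iff hr, smul_sub, smul_inv_smul₀ hr.ne']

theorem orderUnitGauge_mono (he : e ∈ interior (K : Set E)) (huv : v - u ∈ K) :
    orderUnitGauge K e u ≤ orderUnitGauge K e v := by
  refine le_of_forall_gt fun r hr ↦ ?_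
  have hrpos : 0 < r := (gauge_nonneg v).trans_lt hr
  rw [orderUnitGauge_lt_iff he hrpos] at hr ⊢
  simpa only [sub_add_sub_cancel] using add_mem_interior hr huv

theorem orderUnitGauge_add_le (he : e ∈ interior (K : Set E)) (u v : E) :
    orderUnitGauge K e (u + v) ≤ orderUnitGauge K e u + orderUnitGauge K e v :=
  gauge_add_le (convex_setOf_sub_mem K.convex e)
    (absorbent_nhds_zero (setOf_sub_mem_mem_nhds_zero he)) u v

theorem neg_mem_of_orderUnitGauge_eq_zero (hK : IsClosed (K : Set E))
    (he : e ∈ interior (K : Set E)) (hv : orderUnitGauge K e v = 0) : -v ∈ K := by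
  have hlim : Tendsto (fun r : ℝ ↦ r • e - v) (𝓝[>] 0) (𝓝 (-v)) := by
    have hcont : Continuous fun r : ℝ ↦ r • e - v := by fun_prop
    simpa using (hcont.tendsto 0).mono_left nhdsWithin_le_nhds
  refine hK.mem_of_tendsto hlim (eventually_mem_nhdsWithin.mono fun r (hr : 0 < r) ↦ ?_)
  exact interior_subset ((orderUnitGauge_lt_iff he hr).1 (hv.trans_lt hr))

end OrderUnitGauge

/-- `d` is a cone metric over the cone `C`. -/
structure IsConeMetric {X E : Type*} [AddCommGroup E] (C : Set E) (d : X → X → E) : Prop where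
  nonneg : ∀ x y, d x y ∈ C
  eq_zero_iff : ∀ x y, d x y = 0 ↔ x = y
  symm : ∀ x y, d x y = d y x
  triangle : ∀ x y z, d x y + d y z - d x z ∈ C

section ConeMetric

variable {X E : Type*} [AddCommGroup E] [Module ℝ E] [TopologicalSpace E]
  [IsTopologicalAddGroup E] [ContinuousSMul ℝ E] {K : ConvexCone ℝ E} {d : X → X → E} {e : E}

/-- The real metric obtained by composing a cone metric with `orderUnitGauge K e`. -/
noncomputable abbrev IsConeMetric.metricSpace (hd : IsConeMetric K d)
    (hK : IsClosed (K : Set E)) (hsal : K.Salient) (he : e ∈ interior (K : Set E)) :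
    MetricSpace X where
  dist x y := orderUnitGauge K e (d x y)
  dist_self x := by rw [(hd.eq_zero_iff x x).2 rfl, orderUnitGauge, gauge_zero]
  dist_comm x y := by rw [hd.symm]
  dist_triangle x y z :=
    (orderUnitGauge_mono he (hd.triangle x y z)).trans (orderUnitGauge_add_le he _ _)
  eq_of_dist_eq_zero {x y} hxy := by
    by_contra hne
    exact hsal _ (hd.nonneg x y) (mt (hd.eq_zero_iff x y).1 hne)
      (neg_mem_of_orderUnitGauge_eq_zero hK he hxy)

section Scalarized

variable [PseudoMetricSpace X]

theorem ConeConv.tendsto (he : e ∈ interior (K : Set E))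
    (hdist : ∀ x y : X, dist x y = orderUnitGauge K e (d x y)) {x : ℕ → X} {l : X}
    (hx : ConeConv K d x l) : Tendsto x atTop (𝓝 l) := by
  refine Metric.tendsto_atTop.2 fun ε hε ↦ ?_
  obtain ⟨N, hN⟩ := hx (ε • e) ((smul_mem_interior_iff hε).2 he)
  exact ⟨N, fun n hn ↦ (hdist _ _).trans_lt ((orderUnitGauge_lt_iff he hε).2 (hN n hn))⟩

theorem coneCauchy_of_cauchySeq (he : e ∈ interior (K : Set E))
    (hdist : ∀ x y : X, dist x y = orderUnitGauge K e (d x y)) {x : ℕ → X} (hx : CauchySeq x) :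
    ConeCauchy K d x := by
  intro c hc
  obtain ⟨t, ht, hct⟩ := exists_pos_sub_smul_mem_interior_s15 hc e
  obtain ⟨N, hN⟩ := Metric.cauchySeq_iff.1 hx t ht
  refine ⟨N, fun m hm n hn ↦ ?_⟩
  have hdt : t • e - d (x m) (x n) ∈ interior (K : Set E) :=
    (orderUnitGauge_lt_iff he ht).1 ((hdist _ _).symm.trans_lt (hN m hm n hn))
  simpa only [sub_add_sub_cancel] using add_mem_interior hct (interior_subset hdt)

theorem ConeSubsetComplete.isComplete (he : e ∈ interior (K : Set E))
    (hdist : ∀ x y : X, dist x y = orderUnitGauge K e (d x y)) {S : Set X}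
    (hS : ConeSubsetComplete K d S) : IsComplete S := by
  rw [← completeSpace_coe_iff_isComplete]
  refine Metric.complete_of_cauchySeq_tendsto fun x hx ↦ ?_
  obtain ⟨l, hlS, hl⟩ := hS (fun n ↦ x n) (fun n ↦ (x n).2)
    (coneCauchy_of_cauchySeq he hdist (hx.map uniformContinuous_subtype_val))
  exact ⟨⟨l, hlS⟩, tendsto_subtype_rng.2 (hl.tendsto he hdist)⟩

end Scalarized

theorem stmt_15_general {α : Type*} [Nonempty α] (hK : IsClosed (K : Set E)) (hsal : K.Salient)
    (hsolid : (interior (K : Set E)).Nonempty) (hd : IsConeMetric K d) {f g : α → X} {S : Set X}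
    (hS : ConeSubsetComplete K d S) (hfS : Set.range f ⊆ S) (hSg : S ⊆ Set.range g)
    {lam mu nu xi pi : ℝ} (hlam : 0 ≤ lam) (hmu : 0 ≤ mu) (hnu : 0 ≤ nu) (hxi : 0 ≤ xi)
    (hpi : 0 ≤ pi) (hsum : lam + mu + nu + xi + pi < 1)
    (hcontr : ∀ x y, lam • d (g x) (g y) + mu • d (g x) (f x) + nu • d (g y) (f y) +
      xi • d (g x) (f y) + pi • d (g y) (f x) - d (f x) (f y) ∈ K) :
    ∃! w, ∃ x, f x = w ∧ g x = w := by
  obtain ⟨e, he⟩ := hsolid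
  let := hd.metricSpace hK hsal he
  have hdist (x y : X) : dist x y = orderUnitGauge K e (d x y) := rfl
  have hsmul {r : ℝ} (hr : 0 ≤ r) (v : E) :
      orderUnitGauge K e (r • v) = r * orderUnitGauge K e v := gauge_smul_of_nonneg hr v
  have hHR : HardyRogersWith lam ((mu + nu) / 2) ((xi + pi) / 2) f g := by
    refine .of_asymmetric fun x y ↦ (orderUnitGauge_mono he (hcontr x y)).trans ?_
    simp only [hdist, ← hsmul hlam, ← hsmul hmu, ← hsmul hnu, ← hsmul hxi, ← hsmul hpi]
    iterate 4 refine (orderUnitGauge_add_le he _ _).trans (add_le_add_left ?_ _)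
    exact le_rfl
  exact hHR.existsUnique_coincidence hlam (by positivity) (by positivity) (by linarith)
    (hS.isComplete he hdist) hfS hSg

end ConeMetric

theorem stmt_15 {X : Type*} [Nonempty X]
    {E : Type*} [AddCommGroup E] [Module ℝ E] [TopologicalSpace E]
    [IsTopologicalAddGroup E] [ContinuousSMul ℝ E]
    (C : Set E) (hC_closed : IsClosed C) (hC_ne : C ≠ {0})
    (hC_add : ∀ x ∈ C, ∀ y ∈ C, x + y ∈ C)
    (hC_smul : ∀ r : ℝ, 0 ≤ r → ∀ x ∈ C, r • x ∈ C)
    (hC_pointed : C ∩ (-C) = {0})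
    (hSolid : (interior C).Nonempty)
    (d : X → X → E)
    (hd_pos : ∀ x y : X, d x y ∈ C)
    (hd_eq : ∀ x y : X, d x y = 0 ↔ x = y)
    (hd_symm : ∀ x y : X, d x y = d y x)
    (hd_tri : ∀ x y z : X, d x y + d y z - d x z ∈ C)
    (f g : X → X) (hfg : Set.range f ⊆ Set.range g)
    (hcomplete : ConeSubsetComplete C d (Set.range g) ∨
      ConeSubsetComplete C d (Set.range f))
    (lam mu nu xi pi : ℝ)
    (hlam : 0 ≤ lam) (hmu : 0 ≤ mu) (hnu : 0 ≤ nu) (hxi : 0 ≤ xi) (hpi : 0 ≤ pi)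
    (hsum : lam + mu + nu + xi + pi < 1)
    (hcontr : ∀ x y : X,
      lam • d (g x) (g y) + mu • d (g x) (f x) + nu • d (g y) (f y) +
        xi • d (g x) (f y) + pi • d (g y) (f x) - d (f x) (f y) ∈ C) :
    (∃! w : X, ∃ x : X, f x = w ∧ g x = w) ∧
    ((∀ x : X, f x = g x → f (g x) = g (f x)) →
      ∃! z : X, f z = z ∧ g z = z) := by
  let K : ConvexCone ℝ E :=
    { carrier := C
      smul_mem' := fun r hr x hx ↦ hC_smul r hr.le x hx
      add_mem' := fun x hx y hy ↦ hC_add x hx y hy }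
  have hsal : K.Salient := fun v hv hne hneg ↦ hne (hC_pointed.subset ⟨hv, hneg⟩)
  have hd : IsConeMetric K d := ⟨hd_pos, hd_eq, hd_symm, hd_tri⟩
  obtain ⟨S, hS, hfS, hSg⟩ : ∃ S, ConeSubsetComplete C d S ∧ Set.range f ⊆ S ∧ S ⊆ Set.range g :=
    hcomplete.elim (⟨_, ·, hfg, subset_rfl⟩) (⟨_, ·, subset_rfl, hfg⟩)
  have hw := stmt_15_general (K := K) hC_closed hsal hSolid hd hS hfS hSg
    hlam hmu hnu hxi hpi hsum hcontr
  exact ⟨hw, existsUnique_common_fixedPoint hw⟩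
end

section
/- Let X be a nonempty set, E a real topological vector space with a solid cone C, s ≥ 1 a real number, and d : X × X → E a cone b-metric with parameter s, i.e.: d(x,y) ∈ C; d(x,y) = 0 iff x = y; d(x,y) = d(y,x); and d(x,z) ⪯ s(d(x,y) + d(y,z)) for all x, y, z ∈ X. Then for any interior point e of C, the function D(x,y) = ‖d(x,y)‖_e is a b-metric on X with the same parameter s; moreover, a sequence is Cauchy (respectively convergent) in (X,d) if and only if it is Cauchy (respectively convergent) in (X,D). -/
open Filter Topology

/-!
For `u ∈ C`, `‖u‖_e ≤ r` amounts, up to an arbitrarily small increase of `r`, to `u ⪯ r • e`. Since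
`e` is interior, `‖·‖_e` is monotone and sublinear on `C`, which carries the `b`-metric inequality
over, while closedness and pointedness of `C` make it vanish only at `0`. Moreover the multiples
`r • e`, `0 < r`, lie in `int C` and are eventually `≪` any given `c ∈ int C` as `r → 0`, so testing
smallness against them is the same as testing it against all of `int C`.
-/

section Interior

open scoped Pointwise

theorem add_mem_interior_of_mem {G S : Type*} [AddGroup G] [TopologicalSpace G]
    [SeparatelyContinuousAdd G] [SetLike S G] [AddMemClass S G] {C : S} {x y : G}
    (hx : x ∈ interior (C : Set G)) (hy : y ∈ C) : x + y ∈ interior (C : Set G) := by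
  have hsub : (C : Set G) + C ⊆ C := Set.add_subset_iff.2 fun _ ha _ hb => add_mem ha hb
  exact interior_mono hsub (subset_interior_add_left (Set.add_mem_add hx hy))

variable {E : Type*} [AddCommGroup E] [Module ℝ E] [TopologicalSpace E]
  {C : PointedCone ℝ E} {e x : E}

theorem smul_mem_interior_of_pos [ContinuousConstSMul ℝ E] {r : ℝ} (hr : 0 < r)
    (hx : x ∈ interior (C : Set E)) : r • x ∈ interior (C : Set E) := by
  have hsub : r • (C : Set E) ⊆ C := Set.smul_set_subset_iff.2 fun _ ha => C.smul_mem hr.le ha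
  exact interior_mono hsub (interior_smul₀ hr.ne' (C : Set E) ▸ Set.smul_mem_smul_set hx)

variable [IsTopologicalAddGroup E] [ContinuousSMul ℝ E]

theorem exists_pos_sub_smul_mem_interior_s17 {s : Set E} (hx : x ∈ interior s) (e : E) :
    ∃ r : ℝ, 0 < r ∧ x - r • e ∈ interior s := by
  have hlim : Tendsto (fun r : ℝ => x - r • e) (𝓝[>] 0) (𝓝 x) :=
    tendsto_nhdsWithin_of_tendsto_nhds <|
      Continuous.tendsto' (by fun_prop) 0 x (by rw [zero_smul, sub_zero])
  exact (eventually_mem_nhdsWithin.and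
    (hlim.eventually_mem (isOpen_interior.mem_nhds hx))).exists

theorem mem_of_forall_pos_smul_add_mem {s : Set E} (hs : IsClosed s)
    (h : ∀ r : ℝ, 0 < r → r • e + x ∈ s) : x ∈ s := by
  have hlim : Tendsto (fun r : ℝ => r • e + x) (𝓝[>] 0) (𝓝 x) :=
    tendsto_nhdsWithin_of_tendsto_nhds <|
      Continuous.tendsto' (by fun_prop) 0 x (by rw [zero_smul, zero_add])
  exact hs.mem_of_tendsto hlim (eventually_mem_nhdsWithin.mono h)

end Interior

section ConeInterval

open scoped Pointwise

/-- The order interval `[-e, e]` for the preorder induced by `C`, written as in `coneNorm` so that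
`coneNorm C e` is definitionally its gauge. -/
def coneInterval {E : Type*} [AddCommGroup E] (C : Set E) (e : E) : Set E :=
  {z | z + e ∈ C ∧ e - z ∈ C}

variable {E : Type*} [AddCommGroup E] {e x : E}

theorem coneInterval_mem_nhds_zero [TopologicalSpace E] [IsTopologicalAddGroup E]
    {C : Set E} (he : e ∈ interior C) :
    coneInterval C e ∈ 𝓝 0 := by
  have hadd : Tendsto (fun z => z + e) (𝓝 0) (𝓝 e) :=
    Continuous.tendsto' (by fun_prop) 0 e (zero_add e)
  have hsub : Tendsto (fun z => e - z) (𝓝 0) (𝓝 e) :=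
    Continuous.tendsto' (by fun_prop) 0 e (sub_zero e)
  have hC : C ∈ 𝓝 e := mem_interior_iff_mem_nhds.1 he
  exact inter_mem (hadd hC) (hsub hC)

variable [Module ℝ E] {C : PointedCone ℝ E}

theorem convex_coneInterval (C : PointedCone ℝ E) (e : E) : Convex ℝ (coneInterval C e) :=
  (C.convex.translate_preimage_left e).inter
    (C.convex.affine_preimage (AffineEquiv.constVSub ℝ e).toAffineMap)

theorem mem_smul_coneInterval_iff {r : ℝ} (hr : 0 < r) :
    x ∈ r • coneInterval C e ↔ r • e + x ∈ C ∧ r • e - x ∈ C := by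
  have hadd : r • (r⁻¹ • x + e) = r • e + x := by rw [smul_add, smul_inv_smul₀ hr.ne', add_comm]
  have hsub : r • (e - r⁻¹ • x) = r • e - x := by rw [smul_sub, smul_inv_smul₀ hr.ne']
  rw [Set.mem_smul_set_iff_inv_smul_mem₀ hr.ne', ← hadd, ← hsub, C.smul_mem_iff hr,
    C.smul_mem_iff hr]
  rfl

theorem absorbent_coneInterval [TopologicalSpace E] [IsTopologicalAddGroup E]
    [ContinuousSMul ℝ E] {C : Set E} (he : e ∈ interior C) : Absorbent ℝ (coneInterval C e) :=
  absorbent_nhds_zero (coneInterval_mem_nhds_zero he)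

end ConeInterval

section ConeNorm

variable {E : Type*} [AddCommGroup E] [Module ℝ E] {C : PointedCone ℝ E} {e x y : E} {r : ℝ}

theorem coneNorm_nonneg (C : Set E) (e x : E) : 0 ≤ coneNorm C e x :=
  gauge_nonneg x

theorem coneNorm_smul_of_nonneg (C : Set E) (e x : E) (hr : 0 ≤ r) :
    coneNorm C e (r • x) = r * coneNorm C e x :=
  gauge_smul_of_nonneg hr x

theorem coneNorm_le_of_mem (hr : 0 < r) (hadd : r • e + x ∈ C) (hsub : r • e - x ∈ C) :
    coneNorm C e x ≤ r :=
  gauge_le_of_mem hr.le ((mem_smul_coneInterval_iff hr).2 ⟨hadd, hsub⟩)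

variable [TopologicalSpace E] [IsTopologicalAddGroup E] [ContinuousSMul ℝ E]

theorem smul_add_mem_and_smul_sub_mem_of_coneNorm_lt (he : e ∈ interior (C : Set E))
    (h : coneNorm C e x < r) : r • e + x ∈ C ∧ r • e - x ∈ C := by
  obtain ⟨t, ht, htr, hx⟩ := exists_lt_of_gauge_lt (absorbent_coneInterval he) h
  obtain ⟨hadd, hsub⟩ := (mem_smul_coneInterval_iff ht).1 hx
  have hrest : (r - t) • e ∈ C := C.smul_mem (sub_nonneg.2 htr.le) (interior_subset he)
  constructor
  · convert add_mem hrest hadd using 1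
    module
  · convert add_mem hrest hsub using 1
    module

theorem coneNorm_add_le (he : e ∈ interior (C : Set E)) (x y : E) :
    coneNorm C e (x + y) ≤ coneNorm C e x + coneNorm C e y :=
  gauge_add_le (convex_coneInterval C e) (absorbent_coneInterval he) x y

theorem coneNorm_le_coneNorm (he : e ∈ interior (C : Set E)) (hx : x ∈ C) (hxy : y - x ∈ C) :
    coneNorm C e x ≤ coneNorm C e y := by
  refine le_of_forall_gt_imp_ge_of_dense fun r hr => ?_
  have hr₀ : 0 < r := (coneNorm_nonneg _ _ _).trans_lt hr
  have hre : r • e ∈ C := C.smul_mem hr₀.le (interior_subset he)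
  have hry : r • e - y ∈ C := (smul_add_mem_and_smul_sub_mem_of_coneNorm_lt he hr).2
  exact coneNorm_le_of_mem hr₀ (add_mem hre hx) (sub_add_sub_cancel (r • e) y x ▸ add_mem hry hxy)

theorem coneNorm_eq_zero_iff (hC : IsClosed (C : Set E)) (he : e ∈ interior (C : Set E)) :
    coneNorm C e x = 0 ↔ x ∈ (C : Set E) ∩ -C := by
  constructor
  · intro h
    have hmem (r : ℝ) (hr : 0 < r) : r • e + x ∈ C ∧ r • e - x ∈ C :=
      smul_add_mem_and_smul_sub_mem_of_coneNorm_lt he (h.trans_lt hr)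
    exact ⟨mem_of_forall_pos_smul_add_mem hC fun r hr => (hmem r hr).1,
      mem_of_forall_pos_smul_add_mem (e := e) (x := -x) hC fun r hr =>
        sub_eq_add_neg (r • e) x ▸ (hmem r hr).2⟩
  · rintro ⟨hx, hnx⟩
    refine le_antisymm (le_of_forall_gt_imp_ge_of_dense fun r hr => ?_) (coneNorm_nonneg _ _ _)
    have hre : r • e ∈ C := C.smul_mem hr.le (interior_subset he)
    exact coneNorm_le_of_mem hr (add_mem hre hx) (sub_eq_add_neg (r • e) x ▸ add_mem hre hnx)

theorem coneNorm_le_mul_add_of_sub_mem (he : e ∈ interior (C : Set E)) {s : ℝ} (hs : 0 ≤ s)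
    {z : E} (hz : z ∈ C) (h : s • (x + y) - z ∈ C) :
    coneNorm C e z ≤ s * (coneNorm C e x + coneNorm C e y) :=
  calc coneNorm C e z
    _ ≤ coneNorm C e (s • (x + y)) := coneNorm_le_coneNorm he hz h
    _ = s * coneNorm C e (x + y) := coneNorm_smul_of_nonneg _ _ _ hs
    _ ≤ s * (coneNorm C e x + coneNorm C e y) := by
      gcongr
      exact coneNorm_add_le he x y

theorem forall_eventually_sub_mem_interior_iff_coneNorm_lt (he : e ∈ interior (C : Set E))
    {ι : Type*} {l : Filter ι} {u : ι → E} (hu : ∀ i, u i ∈ C) :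
    (∀ c ∈ interior (C : Set E), ∀ᶠ i in l, c - u i ∈ interior (C : Set E)) ↔
      ∀ ε > 0, ∀ᶠ i in l, coneNorm C e (u i) < ε := by
  constructor
  · intro h ε hε
    filter_upwards [h _ (smul_mem_interior_of_pos (half_pos hε) he)] with i hi
    have hadd : (ε / 2) • e + u i ∈ C :=
      add_mem (C.smul_mem (half_pos hε).le (interior_subset he)) (hu i)
    exact (coneNorm_le_of_mem (half_pos hε) hadd (interior_subset hi)).trans_lt (half_lt_self hε)
  · intro h c hc
    obtain ⟨r, hr, hcr⟩ := exists_pos_sub_smul_mem_interior_s17 hc e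
    filter_upwards [h r hr] with i hi
    have hsub : r • e - u i ∈ C := (smul_add_mem_and_smul_sub_mem_of_coneNorm_lt he hi).2
    exact sub_add_sub_cancel c (r • e) (u i) ▸ add_mem_interior_of_mem hcr hsub

end ConeNorm

section Sequences

variable {X E : Type*} [AddCommGroup E] [Module ℝ E] [TopologicalSpace E]
  [IsTopologicalAddGroup E] [ContinuousSMul ℝ E] {C : PointedCone ℝ E} {e : E} {d : X → X → E}

theorem coneConv_iff_tendsto_coneNorm (he : e ∈ interior (C : Set E)) (hd : ∀ x y, d x y ∈ C)
    (x : ℕ → X) (a : X) :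
    ConeConv C d x a ↔
      Tendsto (fun n => coneNorm C e (d (x n) a)) atTop (𝓝 0) := by
  have h := forall_eventually_sub_mem_interior_iff_coneNorm_lt he (l := atTop)
    fun n => hd (x n) a
  simpa only [ConeConv, Metric.tendsto_nhds, Real.dist_0_eq_abs,
    abs_of_nonneg (coneNorm_nonneg _ _ _), eventually_atTop] using h

theorem coneCauchy_iff_coneNorm_lt (he : e ∈ interior (C : Set E)) (hd : ∀ x y, d x y ∈ C)
    (x : ℕ → X) :
    ConeCauchy C d x ↔ ∀ ε : ℝ, 0 < ε → ∃ n₀ : ℕ, ∀ m ≥ n₀, ∀ n ≥ n₀,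
      coneNorm C e (d (x m) (x n)) < ε := by
  have h := forall_eventually_sub_mem_interior_iff_coneNorm_lt he (l := atTop)
    fun p : ℕ × ℕ => hd (x p.1) (x p.2)
  simpa only [ConeCauchy, eventually_atTop_prod_self'] using h

end Sequences

theorem stmt_17 {X : Type*} [Nonempty X]
    {E : Type*} [AddCommGroup E] [Module ℝ E] [TopologicalSpace E]
    [IsTopologicalAddGroup E] [ContinuousSMul ℝ E]
    (C : Set E) (hC_closed : IsClosed C) (hC_ne : C ≠ {0})
    (hC_add : ∀ x ∈ C, ∀ y ∈ C, x + y ∈ C)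
    (hC_smul : ∀ r : ℝ, 0 ≤ r → ∀ x ∈ C, r • x ∈ C)
    (hC_pointed : C ∩ (-C) = {0})
    (hSolid : (interior C).Nonempty)
    (s : ℝ) (hs : 1 ≤ s)
    (d : X → X → E)
    (hd_pos : ∀ x y : X, d x y ∈ C)
    (hd_eq : ∀ x y : X, d x y = 0 ↔ x = y)
    (hd_symm : ∀ x y : X, d x y = d y x)
    (hd_tri : ∀ x y z : X, s • (d x y + d y z) - d x z ∈ C)
    (e : E) (he : e ∈ interior C) :
    -- `D = ‖d ·‖_e` is a b-metric on `X` with the same parameter `s`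
    ((∀ x y : X, 0 ≤ coneNorm C e (d x y)) ∧
     (∀ x y : X, coneNorm C e (d x y) = 0 ↔ x = y) ∧
     (∀ x y : X, coneNorm C e (d x y) = coneNorm C e (d y x)) ∧
     (∀ x y z : X, coneNorm C e (d x z) ≤
        s * (coneNorm C e (d x y) + coneNorm C e (d y z)))) ∧
    -- a sequence converges in `(X, d)` iff it converges in `(X, D)`
    (∀ (x : ℕ → X) (l : X), ConeConv C d x l ↔
      Tendsto (fun n => coneNorm C e (d (x n) l)) atTop (𝓝 0)) ∧
    -- a sequence is Cauchy in `(X, d)` iff it is Cauchy in `(X, D)`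
    (∀ x : ℕ → X, ConeCauchy C d x ↔
      ∀ ε : ℝ, 0 < ε → ∃ n₀ : ℕ, ∀ m ≥ n₀, ∀ n ≥ n₀,
        coneNorm C e (d (x m) (x n)) < ε) := by
  obtain ⟨K, rfl⟩ : ∃ K : PointedCone ℝ E, (K : Set E) = C :=
    ⟨.ofConeComb C ⟨e, interior_subset he⟩ fun x hx y hy a ha b hb =>
      hC_add _ (hC_smul a ha x hx) _ (hC_smul b hb y hy), rfl⟩
  refine ⟨⟨fun x y => coneNorm_nonneg _ _ _, fun x y => ?_, fun x y => by rw [hd_symm],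
    fun x y z => ?_⟩, coneConv_iff_tendsto_coneNorm he hd_pos, coneCauchy_iff_coneNorm_lt he hd_pos⟩
  · rw [coneNorm_eq_zero_iff hC_closed he, hC_pointed, Set.mem_singleton_iff, hd_eq]
  · exact coneNorm_le_mul_add_of_sub_mem he (zero_le_one.trans hs) (hd_pos x z) (hd_tri x y z)
end
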